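/- In the semi-primitive cyclotomic setting (with T_0, T_1 arbitrary subsets of F_q), let a, b ∈ F_{q²} with b ≠ 0, and define U_2 = Σ_{x ∈ D_1} Σ_{y ∈ S_1} ζ_p^{Tr_{q²/p}(x(a+by))}. Then U_2 = −q|T_1| + q² if −ab^{−1} ∈ S_1 and b^{−1} ∈ D_0; U_2 = −q|T_1| if −ab^{−1} ∉ S_1 and b^{−1} ∈ D_0; and U_2 = 0 if b^{−1} ∈ D_1. -/

import Mathlib

noncomputable section

def zetaP (p : ℕ) : ℂ := Complex.exp (2 * Real.pi * Complex.I / p)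

/-- The canonical additive character `ψ(x) = ζ_p^{Tr_{L/F_p}(x)}`. -/
def psiL (p : ℕ) (L : Type) [Field L] [Fintype L] [CharP L p] (x : L) : ℂ :=
  letI : Algebra (ZMod p) L := ZMod.algebra L p
  zetaP p ^ (Algebra.trace (ZMod p) L x).val

/-- `ψ_{a,b}(E) = Σ_{(x,y)∈E} ψ(ax+by)`. -/
def psiSum (p : ℕ) (L : Type) [Field L] [Fintype L] [CharP L p]
    (a b : L) (E : Set (L × L)) : ℂ :=
  ∑ᶠ z ∈ E, psiL p L (a * z.1 + b * z.2)

/-- a subset of `F_{q²} × F_{q²}` of type Q. -/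
def IsTypeQ (p q : ℕ) (L : Type) [Field L] [Fintype L] [CharP L p]
    (E : Set (L × L)) : Prop :=
  E.ncard = (q ^ 4 - 1) / 4 ∧
    ∀ a b : L, (a, b) ≠ ((0 : L), (0 : L)) →
      psiSum p L a b E = ((q : ℂ) ^ 2 - 1) / 4 ∨
      psiSum p L a b E = (-3 * (q : ℂ) ^ 2 - 1) / 4

/-- the cyclotomic class `C_i^{(N,q²)} = ω^i⟨ω^N⟩`. -/
def cyc (L : Type) [Field L] (ω : L) (N i : ℕ) : Set L :=
  {x | ∃ k : ℕ, x = ω ^ i * (ω ^ N) ^ k}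

/-- ω is a primitive element (generator of the multiplicative group). -/
def IsPrim (L : Type) [Field L] (ω : L) : Prop :=
  ∀ x : L, x ≠ 0 → ∃ n : ℕ, x = ω ^ n

/-!
For a nontrivial additive character `χ` of `K = F_q`, orthogonality on `K` and on `L` shows that
`∑ χ(Tr(y v))` over the hyperplane `Tr(y w) = u` vanishes unless `v = z w` for some `z ∈ K`, where
it equals `|L| / q · χ(z u)` (when `w ≠ 0`). Taking `v = b x` and `w = ω ^ m`, only the
`x = z ω ^ m b⁻¹` contribute to `U₂`. Each nonzero element of `K` is a norm from `L`, hence a power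
of `ω ^ (2 m)`, so such an `x` lies in `D₁ = ω ^ m D₀` exactly when `z ≠ 0` and `b⁻¹ ∈ D₀`. In that
case `U₂` is `|L| / q` times `∑_{z ≠ 0} ∑_{u ∈ T₁} χ(z (u - Tr(-a b⁻¹ ω ^ m)))`, and orthogonality
on `K` evaluates the sum over `z`.
-/

open Finset

section CyclotomicClasses

variable {L : Type} [Field L] {ω : L} {N : ℕ}

lemma IsPrim.ne_zero [Fintype L] (hω : IsPrim L ω) (hL : 2 < Fintype.card L) : ω ≠ 0 := by
  classical
  obtain ⟨x, -, hx⟩ : ∃ x ∈ univ, x ∉ ({0, 1} : Finset L) :=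
    exists_mem_notMem_of_card_lt_card (card_le_two.trans_lt hL)
  simp only [mem_insert, mem_singleton, not_or] at hx
  rintro rfl
  obtain ⟨n, rfl⟩ := hω x hx.1
  rcases n.eq_zero_or_pos with rfl | hn
  · exact hx.2 (pow_zero 0)
  · exact hx.1 (zero_pow hn.ne')

lemma IsPrim.orderOf_eq (hω : IsPrim L ω) (hω₀ : ω ≠ 0) : orderOf ω = Nat.card L - 1 := by
  have h_gen : ∀ u : Lˣ, u ∈ Submonoid.powers (Units.mk0 ω hω₀) := fun u ↦ by
    obtain ⟨n, hn⟩ := hω u u.ne_zero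
    exact ⟨n, Units.ext hn.symm⟩
  rw [← Nat.card_units, ← orderOf_eq_card_of_forall_mem_powers h_gen, ← orderOf_units,
    Units.val_mk0]

lemma zero_notMem_cyc (hω₀ : ω ≠ 0) (i : ℕ) : 0 ∉ cyc L ω N i := by
  rintro ⟨k, hk⟩
  exact mul_ne_zero (pow_ne_zero i hω₀) (pow_ne_zero k (pow_ne_zero N hω₀)) hk.symm

lemma pow_mul_mem_cyc_add_iff (hω₀ : ω ≠ 0) (i m : ℕ) (x : L) :
    ω ^ m * x ∈ cyc L ω N (i + m) ↔ x ∈ cyc L ω N i := by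
  refine exists_congr fun k ↦ ?_
  rw [add_comm i m, pow_add, mul_assoc]
  exact mul_right_inj' (pow_ne_zero m hω₀)

lemma modEq_of_mem_cyc_of_mem_cyc (hω₀ : ω ≠ 0) (hN : N ∣ orderOf ω) {i j : ℕ} {x : L}
    (hi : x ∈ cyc L ω N i) (hj : x ∈ cyc L ω N j) : i ≡ j [MOD N] := by
  obtain ⟨k, rfl⟩ := hi
  obtain ⟨k', hk⟩ := hj
  lift ω to Lˣ using hω₀.isUnit
  rw [orderOf_units] at hN
  simp only [← pow_mul, ← pow_add] at hk
  norm_cast at hk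
  simpa [Nat.ModEq] using (pow_eq_pow_iff_modEq.mp hk).of_dvd hN

lemma IsPrim.disjoint_iUnion_cyc_add (hω : IsPrim L ω) (hω₀ : ω ≠ 0)
    (hN : N ∣ Nat.card L - 1) {I : Set ℕ} {m : ℕ} (hI : ∀ i ∈ I, ∀ j ∈ I, ¬i + m ≡ j [MOD N]) :
    Disjoint (⋃ i ∈ I, cyc L ω N i) (⋃ i ∈ I, cyc L ω N (i + m)) := by
  rw [← hω.orderOf_eq hω₀] at hN
  simp only [Set.disjoint_left, Set.mem_iUnion, not_exists]
  rintro x ⟨j, hj, hxj⟩ i hi hxi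
  exact hI i hi j hj (modEq_of_mem_cyc_of_mem_cyc hω₀ hN hxi hxj)

variable {K : Type*} [Field K] [Algebra K L] [Finite L]

lemma IsPrim.exists_algebraMap_eq_pow_pow (hω : IsPrim L ω)
    (hN : N ∣ (Nat.card L - 1) / (Nat.card K - 1)) {z : K} (hz : z ≠ 0) :
    ∃ k : ℕ, algebraMap K L z = (ω ^ N) ^ k := by
  obtain ⟨y, rfl⟩ := FiniteField.norm_surjective K L z
  obtain ⟨n, rfl⟩ := hω y (by rintro rfl; exact hz Algebra.norm_zero)
  obtain ⟨c, hc⟩ := hN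
  refine ⟨n * c, ?_⟩
  rw [FiniteField.algebraMap_norm_eq_pow, hc]
  ring

lemma IsPrim.smul_mem_cyc (hω : IsPrim L ω) (hN : N ∣ (Nat.card L - 1) / (Nat.card K - 1))
    {i : ℕ} {z : K} (hz : z ≠ 0) {x : L} (hx : x ∈ cyc L ω N i) : z • x ∈ cyc L ω N i := by
  obtain ⟨k, rfl⟩ := hx
  obtain ⟨k', hk'⟩ := hω.exists_algebraMap_eq_pow_pow hN hz
  refine ⟨k' + k, ?_⟩
  rw [Algebra.smul_def, hk', pow_add]
  ring

lemma IsPrim.smul_mem_cyc_iff (hω : IsPrim L ω) (hω₀ : ω ≠ 0)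
    (hN : N ∣ (Nat.card L - 1) / (Nat.card K - 1)) {i : ℕ} {z : K} {x : L} :
    z • x ∈ cyc L ω N i ↔ z ≠ 0 ∧ x ∈ cyc L ω N i := by
  rcases eq_or_ne z 0 with rfl | hz
  · simp [zero_notMem_cyc hω₀]
  · refine ⟨fun h ↦ ⟨hz, ?_⟩, fun h ↦ hω.smul_mem_cyc hN hz h.2⟩
    simpa [smul_smul, hz] using hω.smul_mem_cyc hN (inv_ne_zero hz) h

lemma IsPrim.smul_pow_mul_mem_iUnion_cyc_iff (hω : IsPrim L ω) (hω₀ : ω ≠ 0)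
    (hN : N ∣ (Nat.card L - 1) / (Nat.card K - 1)) {I : Set ℕ} {m : ℕ} {z : K} {x : L} :
    z • (ω ^ m * x) ∈ ⋃ i ∈ I, cyc L ω N (i + m) ↔ z ≠ 0 ∧ x ∈ ⋃ i ∈ I, cyc L ω N i := by
  simp only [Set.mem_iUnion, ← mul_smul_comm, pow_mul_mem_cyc_add_iff hω₀,
    hω.smul_mem_cyc_iff hω₀ hN]
  tauto

end CyclotomicClasses

section TraceCharacters

lemma isPrimitive_compAddMonoidHom_trace {F E M : Type*} [Field F] [Field E] [Algebra F E]
    [FiniteDimensional F E] [Algebra.IsSeparable F E] [CommMonoid M] {χ : AddChar F M}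
    (hχ : χ ≠ 1) : (χ.compAddMonoidHom (Algebra.trace F E).toAddMonoidHom).IsPrimitive := by
  refine .of_ne_one fun h ↦ hχ ?_
  exact AddChar.compAddMonoidHom_injective_left _ (Algebra.trace_surjective F E) h

lemma stdAddChar_eq_zetaP_pow {p : ℕ} [NeZero p] (c : ZMod p) :
    ZMod.stdAddChar c = zetaP p ^ c.val := by
  rw [ZMod.stdAddChar_apply, ZMod.toCircle_apply, zetaP, ← Complex.exp_nat_mul]
  congr 1
  ring

lemma exists_addChar_psiL_eq_trace (p : ℕ) (K : Type*) (L : Type) [Field K] [Field L] [Fintype L]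
    [Algebra K L] [CharP L p] :
    ∃ χ : AddChar K ℂ, χ ≠ 1 ∧ ∀ x : L, psiL p L x = χ (Algebra.trace K L x) := by
  have : Fact p.Prime := ⟨CharP.char_is_prime L p⟩
  have : CharP K p := (algebraMap K L).charP (algebraMap K L).injective p
  have : Finite K := .of_injective _ (algebraMap K L).injective
  let := ZMod.algebra L p
  let := ZMod.algebra K p
  have : IsScalarTower (ZMod p) K L := .of_algebraMap_eq' (Subsingleton.elim _ _)
  have h_std : (ZMod.stdAddChar : AddChar (ZMod p) ℂ) ≠ 1 := by
    simpa using ZMod.isPrimitive_stdAddChar p one_ne_zero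
  refine ⟨ZMod.stdAddChar.compAddMonoidHom (Algebra.trace (ZMod p) K).toAddMonoidHom, ?_,
    fun x ↦ ?_⟩
  · simpa using isPrimitive_compAddMonoidHom_trace (E := K) h_std one_ne_zero
  · change zetaP p ^ (Algebra.trace (ZMod p) L x).val =
      ZMod.stdAddChar (Algebra.trace (ZMod p) K (Algebra.trace K L x))
    rw [Algebra.trace_trace, stdAddChar_eq_zetaP_pow]

end TraceCharacters

section CharacterSums

variable {K L R : Type*} [Field K] [Field L] [Algebra K L] [CommRing R] [IsDomain R]
  {χ : AddChar K R}

lemma sum_ne_zero_sum_mul_sub [Fintype K] [DecidableEq K] (hχ : χ ≠ 1) (T : Finset K) (c : K) :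
    ∑ z with z ≠ 0, ∑ u ∈ T, χ (z * (u - c)) =
      (if c ∈ T then (Fintype.card K : R) else 0) - #T := by
  rw [sum_comm]
  simp [filter_ne', sum_erase_eq_sub, AddChar.sum_mulShift _ (.of_ne_one hχ), sub_eq_zero]

lemma sum_trace_mul [Finite K] [Fintype L] [DecidableEq L] (hχ : χ ≠ 1) (v : L) :
    ∑ y : L, χ (Algebra.trace K L (y * v)) = if v = 0 then (Fintype.card L : R) else 0 := by
  simpa using AddChar.sum_mulShift v (isPrimitive_compAddMonoidHom_trace (E := L) hχ)

variable [Fintype K] [Fintype L] [DecidableEq K]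

-- Detect the condition `Tr(y * w) = u` by the character sum `∑ z, χ (z * (u - Tr(y * w)))`.
lemma card_mul_sum_trace_fiber [DecidableEq L] (hχ : χ ≠ 1) (v w : L) (u : K) :
    (Fintype.card K : R) * ∑ y with Algebra.trace K L (y * w) = u, χ (Algebra.trace K L (y * v)) =
      Fintype.card L * ∑ z with z • w = v, χ (z * u) := by
  have h_term (y : L) (z : K) : χ (z * (u - Algebra.trace K L (y * w))) *
      χ (Algebra.trace K L (y * v)) = χ (z * u) * χ (Algebra.trace K L (y * (v - z • w))) := by
    rw [← AddChar.map_add_eq_mul, ← AddChar.map_add_eq_mul, mul_sub y, mul_smul_comm, map_sub,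
      map_smul, smul_eq_mul]
    ring_nf
  calc (Fintype.card K : R) *
        ∑ y with Algebra.trace K L (y * w) = u, χ (Algebra.trace K L (y * v))
      = ∑ y, (∑ z, χ (z * (u - Algebra.trace K L (y * w)))) * χ (Algebra.trace K L (y * v)) := by
        simp [AddChar.sum_mulShift _ (.of_ne_one hχ), sub_eq_zero, mul_sum, sum_filter,
          eq_comm (a := u)]
    _ = ∑ z, χ (z * u) * ∑ y, χ (Algebra.trace K L (y * (v - z • w))) := by
        simp only [sum_mul, mul_sum, h_term]
        exact sum_comm
    _ = Fintype.card L * ∑ z with z • w = v, χ (z * u) := by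
        simp [sum_trace_mul hχ, sub_eq_zero, mul_sum, sum_filter, eq_comm, mul_comm]

lemma card_mul_sum_trace_preimage [DecidableEq L] (hχ : χ ≠ 1) (T : Finset K) (v v' w : L) :
    (Fintype.card K : R) *
        ∑ y with Algebra.trace K L (y * w) ∈ T, χ (Algebra.trace K L (v' + y * v)) =
      Fintype.card L *
        ∑ z with z • w = v, ∑ u ∈ T, χ (z * u + Algebra.trace K L v') := by
  simp only [map_add, AddChar.map_add_eq_mul, ← mul_sum, ← sum_mul]
  rw [mul_left_comm, ← sum_fiberwise_eq_sum_filter, mul_sum]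
  simp only [card_mul_sum_trace_fiber hχ, ← mul_sum]
  rw [sum_comm]
  ring

lemma card_mul_sum_sum_trace_preimage [DecidableEq L] (hχ : χ ≠ 1) (T : Finset K) (D : Finset L)
    (a w : L) {b : L} (hb : b ≠ 0) :
    (Fintype.card K : R) * ∑ x ∈ D, ∑ y with Algebra.trace K L (y * w) ∈ T,
        χ (Algebra.trace K L (x * (a + b * y))) =
      Fintype.card L * ∑ z with z • (w * b⁻¹) ∈ D,
        ∑ u ∈ T, χ (z * (u - Algebra.trace K L (-a * b⁻¹ * w))) := by
  have h_index (x : L) (z : K) : z • w = x * b ↔ z • (w * b⁻¹) = x := by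
    rw [← smul_mul_assoc, ← div_eq_mul_inv, div_eq_iff hb]
  have h_arg (z u : K) : z * u + Algebra.trace K L (z • (w * b⁻¹) * a) =
      z * (u - Algebra.trace K L (-a * b⁻¹ * w)) := by
    rw [smul_mul_assoc, map_smul, smul_eq_mul, neg_mul, neg_mul, map_neg, sub_neg_eq_add, mul_add,
      mul_right_comm, mul_comm w a, mul_right_comm]
  calc (Fintype.card K : R) * ∑ x ∈ D, ∑ y with Algebra.trace K L (y * w) ∈ T,
        χ (Algebra.trace K L (x * (a + b * y)))
      = Fintype.card L * ∑ x ∈ D, ∑ z with z • (w * b⁻¹) = x,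
          ∑ u ∈ T, χ (z * u + Algebra.trace K L (x * a)) := by
        simp only [mul_sum (s := D), ← h_index, ← card_mul_sum_trace_preimage hχ,
          mul_add, mul_comm, mul_left_comm]
    _ = Fintype.card L * ∑ x ∈ D, ∑ z with z • (w * b⁻¹) = x,
          ∑ u ∈ T, χ (z * (u - Algebra.trace K L (-a * b⁻¹ * w))) := by
        congr 1
        refine sum_congr rfl fun x _ ↦ sum_congr rfl fun z hz ↦ ?_
        obtain rfl := (mem_filter.mp hz).2
        simp only [h_arg]
    _ = _ := by rw [sum_fiberwise_eq_sum_filter]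

lemma card_mul_sum_sum_trace_preimage_eq_ite (hχ : χ ≠ 1) (T : Finset K) {D : Finset L} (a : L)
    {b w : L} (hb : b ≠ 0) {P : Prop} [Decidable P]
    (hD : ∀ z : K, z • (w * b⁻¹) ∈ D ↔ z ≠ 0 ∧ P) :
    (Fintype.card K : R) * ∑ x ∈ D, ∑ y with Algebra.trace K L (y * w) ∈ T,
        χ (Algebra.trace K L (x * (a + b * y))) =
      if P then
        Fintype.card L *
          ((if Algebra.trace K L (-a * b⁻¹ * w) ∈ T then (Fintype.card K : R) else 0) - #T)
      else 0 := by
  classical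
  rw [card_mul_sum_sum_trace_preimage hχ T D a w hb]
  by_cases hP : P <;> simp only [hD, hP, and_true, and_false, filter_false, sum_empty, mul_zero,
    if_true, if_false, sum_ne_zero_sum_mul_sub hχ]

end CharacterSums

theorem semiprimitive_U2_general {p q n N m : ℕ} {K : Type*} {L : Type} [Field K] [Fintype K]
    [Field L] [Fintype L] [Algebra K L] [CharP L p]
    (hK : Fintype.card K = q) (hL : Fintype.card L = q ^ (n + 1))
    (hN : N ∣ ∑ i ∈ range (n + 1), q ^ i)
    {ω : L} (hω : IsPrim L ω) (hω₀ : ω ≠ 0) {I : Set ℕ} {D₀ D₁ S : Set L} {T : Set K}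
    (hD₀ : D₀ = ⋃ i ∈ I, cyc L ω N i) (hD₁ : D₁ = ⋃ i ∈ I, cyc L ω N (i + m))
    (hS : S = {x : L | Algebra.trace K L (x * ω ^ m) ∈ T})
    (a : L) {b : L} (hb : b ≠ 0)
    {U : ℂ} (hU : U = ∑ᶠ x ∈ D₁, ∑ᶠ y ∈ S, psiL p L (x * (a + b * y))) :
    (-a * b⁻¹ ∈ S ∧ b⁻¹ ∈ D₀ → U = -(q : ℂ) ^ n * T.ncard + (q : ℂ) ^ (n + 1)) ∧
      (-a * b⁻¹ ∉ S ∧ b⁻¹ ∈ D₀ → U = -(q : ℂ) ^ n * T.ncard) ∧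
      (b⁻¹ ∉ D₀ → U = 0) := by
  classical
  obtain ⟨χ, hχ, hψ⟩ := exists_addChar_psiL_eq_trace p K L
  have hq : 2 ≤ q := hK ▸ Fintype.one_lt_card
  have hq₀ : (q : ℂ) ≠ 0 := Nat.cast_ne_zero.mpr (by lia)
  have hN_index : N ∣ (Nat.card L - 1) / (Nat.card K - 1) := by
    simpa only [Nat.card_eq_fintype_card, hK, hL, Nat.geomSum_eq hq] using hN
  have h_mem (z : K) : z • (ω ^ m * b⁻¹) ∈ D₁.toFinset ↔ z ≠ 0 ∧ b⁻¹ ∈ D₀ := by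
    rw [Set.mem_toFinset, hD₀, hD₁, hω.smul_pow_mul_mem_iUnion_cyc_iff hω₀ hN_index]
  have hU_sum : U = ∑ x ∈ D₁.toFinset, ∑ y with Algebra.trace K L (y * ω ^ m) ∈ T.toFinset,
      χ (Algebra.trace K L (x * (a + b * y))) := by
    simp only [hU, finsum_mem_eq_toFinset_sum, hψ]
    simp [hS]
  have h_eval : (q : ℂ) * U = if b⁻¹ ∈ D₀ then
      (q : ℂ) ^ (n + 1) * ((if -a * b⁻¹ ∈ S then (q : ℂ) else 0) - T.ncard) else 0 := by
    simpa [hU_sum, hS, hK, hL, Set.ncard_eq_toFinset_card'] using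
      card_mul_sum_sum_trace_preimage_eq_ite hχ T.toFinset a hb h_mem
  refine ⟨fun ⟨h_in, hbD⟩ ↦ ?_, fun ⟨h_out, hbD⟩ ↦ ?_, fun hbD ↦ ?_⟩ <;>
    refine mul_left_cancel₀ hq₀ (h_eval.trans ?_)
  · rw [if_pos hbD, if_pos h_in]; ring
  · rw [if_pos hbD, if_neg h_out]; ring
  · rw [if_neg hbD, mul_zero]

/-- Lemma 3.6: evaluation of `U₂`. -/
theorem semiprimitive_U2
    (p s q m l t : ℕ) (hp : p.Prime) (hpodd : p ≠ 2) (hs : 0 < s) (hq : q = p ^ s)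
    (hm : 0 < m) (hdvd : 2 * m ∣ q + 1)
    (hl : 0 < l) (hldvd : 2 * m ∣ p ^ l + 1)
    (hlmin : ∀ l', 0 < l' → 2 * m ∣ p ^ l' + 1 → l ≤ l')
    (ht : s = l * t)
    (K L : Type) [Field K] [Fintype K] [Field L] [Fintype L] [Algebra K L] [CharP L p]
    (hK : Fintype.card K = q) (hL : Fintype.card L = q ^ 2)
    (ω : L) (hω : IsPrim L ω)
    (Kst : Finset ℕ) (hKsub : ∀ k ∈ Kst, k < 2 * m) (hKcard : Kst.card = m)
    (hKdisj : ∀ k ∈ Kst, (k + m) % (2 * m) ∉ Kst)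
    (D₀ D₁ : Set L)
    (hD₀ : D₀ = ⋃ i ∈ Kst, cyc L ω (2 * m) i)
    (hD₁ : D₁ = ⋃ i ∈ Kst, cyc L ω (2 * m) (i + m))
    (T₀ T₁ : Set K)
    (S₀ S₁ : Set L)
    (hS₀ : S₀ = {x : L | Algebra.trace K L x ∈ T₀})
    (hS₁ : S₁ = {x : L | Algebra.trace K L (x * ω ^ m) ∈ T₁})
    (a b : L) (hb : b ≠ 0)
    (U₂ : ℂ) (hU₂ : U₂ = ∑ᶠ x ∈ D₁, ∑ᶠ y ∈ S₁, psiL p L (x * (a + b * y)))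
    : (-a * b⁻¹ ∈ S₁ ∧ b⁻¹ ∈ D₀ → U₂ = -(q : ℂ) * T₁.ncard + (q : ℂ) ^ 2) ∧
      (-a * b⁻¹ ∉ S₁ ∧ b⁻¹ ∈ D₀ → U₂ = -(q : ℂ) * T₁.ncard) ∧
      (b⁻¹ ∈ D₁ → U₂ = 0) := by
  have hq₂ : 2 ≤ q := hK ▸ Fintype.one_lt_card
  have hω₀ : ω ≠ 0 := hω.ne_zero (by rw [hL]; nlinarith)
  have h_card : Nat.card L - 1 = (q + 1) * (q - 1) := by
    simpa [hL] using Nat.sq_sub_sq q 1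
  have h_disj : Disjoint D₀ D₁ := by
    rw [hD₀, hD₁]
    exact hω.disjoint_iUnion_cyc_add (I := Kst) hω₀ (h_card ▸ hdvd.mul_right _)
      fun i hi j hj h_mod ↦ hKdisj i hi (by rwa [h_mod, Nat.mod_eq_of_lt (hKsub j hj)])
  have h_general := semiprimitive_U2_general (n := 1) (N := 2 * m) (I := Kst) hK hL
    (by simpa [Finset.sum_range_succ, add_comm] using hdvd) hω hω₀ hD₀ hD₁ hS₁ a hb hU₂
  rw [pow_one] at h_general
  exact h_general.imp_right (And.imp_right fun h hbD ↦ h (h_disj.notMem_of_mem_right hbD))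

end
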